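/- Let u be a subharmonic function on an open set Ω ⊂ ℝ^m whose distributional Laplacian Δu has finite total mass ‖Δu‖_Ω < ∞. For δ > 0 let û_δ(x) := (1/(τ_m δ^m)) ∫_{|ζ−x| ≤ δ} u(ζ) dV(ζ) be the ball average over B(x,δ). Then for δ small enough, ∫_{Ω_δ} (û_δ(x) − u(x)) dV(x) ≤ C_m · ‖Δu‖_Ω · δ², where Ω_δ = {x ∈ Ω : dist(x,∂Ω) > δ}, τ_m is the volume of the unit ball, and C_m depends only on m. -/

import Mathlib

open Set MeasureTheory Metric

/-- The Laplacian of a (twice differentiable) test function on `ℝ^m`. -/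
noncomputable def testLaplacian {m : ℕ} (φ : EuclideanSpace ℝ (Fin m) → ℝ)
    (x : EuclideanSpace ℝ (Fin m)) : ℝ :=
  ∑ i : Fin m,
    fderiv ℝ (fun y => fderiv ℝ φ y (EuclideanSpace.single i 1)) x
      (EuclideanSpace.single i 1)

namespace BallAvg

section Param

variable {E F P : Type*} [NormedAddCommGroup E] [NormedSpace ℝ E] [MeasurableSpace E]
  [BorelSpace E] [FiniteDimensional ℝ E] [NormedAddCommGroup F] [NormedSpace ℝ F]
  [FiniteDimensional ℝ F] [MeasurableSpace P]

theorem shift_aesm (ν : Measure P) (g : P → E) (hg : Measurable g) (f : E → F)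
    (hf : Continuous f) (x : E) : AEStronglyMeasurable (fun p => f (x + g p)) ν := by
  have h1 : StronglyMeasurable f := hf.stronglyMeasurable
  exact (h1.comp_measurable (measurable_const.add hg)).aestronglyMeasurable

theorem shift_integrable (ν : Measure P) (c : P → ℝ) (hc : Integrable c ν) (g : P → E)
    (hg : Measurable g) (f : E → F) (hf : Continuous f) (hs : HasCompactSupport f) (x : E) :
    Integrable (fun p => c p • f (x + g p)) ν := by
  obtain ⟨C, hC⟩ := hs.exists_bound_of_continuous hf
  exact hc.smul_bdd C (shift_aesm ν g hg f hf x) (Filter.Eventually.of_forall fun p => hC _)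

theorem shift_continuous (ν : Measure P) (c : P → ℝ) (hc : Integrable c ν) (g : P → E)
    (hg : Measurable g) (f : E → F) (hf : Continuous f) (hs : HasCompactSupport f) :
    Continuous (fun x => ∫ p, c p • f (x + g p) ∂ν) := by
  obtain ⟨C, hC⟩ := hs.exists_bound_of_continuous hf
  refine continuous_of_dominated (bound := fun p => ‖c p‖ * C) ?_ ?_ ?_ ?_
  · intro x
    exact (shift_integrable ν c hc g hg f hf hs x).aestronglyMeasurable
  · intro x
    refine Filter.Eventually.of_forall fun p => ?_
    rw [norm_smul]
    exact mul_le_mul_of_nonneg_left (hC _) (norm_nonneg _)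
  · exact hc.norm.mul_const C
  · refine Filter.Eventually.of_forall fun p => ?_
    fun_prop

theorem shift_hasFDerivAt (ν : Measure P) (c : P → ℝ) (hc : Integrable c ν) (g : P → E)
    (hg : Measurable g) (f : E → F) (hf : ContDiff ℝ 1 f) (hs : HasCompactSupport f) (x : E) :
    HasFDerivAt (fun x => ∫ p, c p • f (x + g p) ∂ν)
      (∫ p, c p • fderiv ℝ f (x + g p) ∂ν) x := by
  have hf' : Continuous (fderiv ℝ f) := hf.continuous_fderiv (by simp)
  have hs' : HasCompactSupport (fderiv ℝ f) := hs.fderiv ℝ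
  obtain ⟨C, hC⟩ := hs'.exists_bound_of_continuous hf'
  refine hasFDerivAt_integral_of_dominated_of_fderiv_le (𝕜 := ℝ) (s := univ)
    (F := fun x p => c p • f (x + g p)) (F' := fun x p => c p • fderiv ℝ f (x + g p))
    (bound := fun p => ‖c p‖ * C) Filter.univ_mem ?_ ?_ ?_ ?_ ?_ ?_
  · exact Filter.Eventually.of_forall fun y =>
      (shift_integrable ν c hc g hg f hf.continuous hs y).aestronglyMeasurable
  · exact shift_integrable ν c hc g hg f hf.continuous hs x
  · exact (shift_integrable ν c hc g hg (fderiv ℝ f) hf' hs' x).aestronglyMeasurable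
  · refine Filter.Eventually.of_forall fun p y _ => ?_
    rw [norm_smul]
    exact mul_le_mul_of_nonneg_left (hC _) (norm_nonneg _)
  · exact hc.norm.mul_const C
  · refine Filter.Eventually.of_forall fun p y _ => ?_
    have h1 : HasFDerivAt f (fderiv ℝ f (y + g p)) (y + g p) :=
      ((hf.differentiable (by simp)) _).hasFDerivAt
    exact ((hasFDerivAt_comp_add_right (g p)).2 h1).const_smul (c p)

theorem shift_contDiff_two (ν : Measure P) (c : P → ℝ) (hc : Integrable c ν) (g : P → E)
    (hg : Measurable g) (f : E → F) (hf : ContDiff ℝ 2 f) (hs : HasCompactSupport f) :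
    ContDiff ℝ 2 (fun x => ∫ p, c p • f (x + g p) ∂ν) := by
  have hf1 : ContDiff ℝ 1 f := hf.of_le (by norm_num)
  have hf' : ContDiff ℝ 1 (fderiv ℝ f) := hf.fderiv_right (by norm_num)
  have hs' : HasCompactSupport (fderiv ℝ f) := hs.fderiv ℝ
  have e1 : fderiv ℝ (fun x => ∫ p, c p • f (x + g p) ∂ν) =
      fun x => ∫ p, c p • fderiv ℝ f (x + g p) ∂ν :=
    funext fun x => (shift_hasFDerivAt ν c hc g hg f hf1 hs x).fderiv
  have e2 : fderiv ℝ (fun x => ∫ p, c p • fderiv ℝ f (x + g p) ∂ν) =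
      fun x => ∫ p, c p • fderiv ℝ (fderiv ℝ f) (x + g p) ∂ν :=
    funext fun x => (shift_hasFDerivAt ν c hc g hg _ hf' hs' x).fderiv
  have h2 : (2 : WithTop ℕ∞) = 1 + 1 := by norm_num
  rw [h2, contDiff_succ_iff_fderiv]
  refine ⟨fun x => (shift_hasFDerivAt ν c hc g hg f hf1 hs x).differentiableAt,
    fun h => by simp at h, ?_⟩
  rw [e1, contDiff_one_iff_fderiv, e2]
  exact ⟨fun x => (shift_hasFDerivAt ν c hc g hg _ hf' hs' x).differentiableAt,
    shift_continuous ν c hc g hg _ (hf'.continuous_fderiv (by simp)) (hs'.fderiv ℝ)⟩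

/-- Directional derivative of the superposition. -/
theorem shift_fderiv_apply (ν : Measure P) (c : P → ℝ) (hc : Integrable c ν) (g : P → E)
    (hg : Measurable g) (f : E → ℝ) (hf : ContDiff ℝ 1 f) (hs : HasCompactSupport f) (x v : E) :
    fderiv ℝ (fun x => ∫ p, c p • f (x + g p) ∂ν) x v =
      ∫ p, c p • (fderiv ℝ f (x + g p) v) ∂ν := by
  rw [(shift_hasFDerivAt ν c hc g hg f hf hs x).fderiv,
    ContinuousLinearMap.integral_apply]
  · rfl
  · exact shift_integrable ν c hc g hg (fderiv ℝ f) (hf.continuous_fderiv (by simp))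
      (hs.fderiv ℝ) x

end Param

section Lap

variable {m : ℕ}

local notation "𝔼" => EuclideanSpace ℝ (Fin m)

theorem pd_contDiff (f : 𝔼 → ℝ) (hf : ContDiff ℝ 2 f) (v : 𝔼) :
    ContDiff ℝ 1 (fun y => fderiv ℝ f y v) :=
  (hf.fderiv_right (m := 1) (by norm_num)).clm_apply contDiff_const

theorem pd_supp (f : 𝔼 → ℝ) (hs : HasCompactSupport f) (v : 𝔼) :
    HasCompactSupport (fun y => fderiv ℝ f y v) :=
  hs.fderiv_apply ℝ v

theorem lap_continuous (f : 𝔼 → ℝ) (hf : ContDiff ℝ 2 f) : Continuous (testLaplacian f) := by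
  unfold testLaplacian
  refine continuous_finsetSum _ fun i _ => ?_
  exact ((pd_contDiff f hf _).continuous_fderiv (by simp)).clm_apply continuous_const

theorem lap_supp (f : 𝔼 → ℝ) (hs : HasCompactSupport f) : HasCompactSupport (testLaplacian f) := by
  refine HasCompactSupport.intro' hs.isCompact (isClosed_tsupport f) ?_
  intro x hx
  have h : ∀ v : 𝔼, fderiv ℝ (fun y => fderiv ℝ f y v) x = 0 := by
    intro v
    refine image_eq_zero_of_notMem_tsupport fun h => hx ?_
    exact tsupport_fderiv_apply_subset ℝ v (tsupport_fderiv_subset ℝ h)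
  simp [testLaplacian, h]

theorem shift_lap {P : Type*} [MeasurableSpace P] (ν : Measure P) (c : P → ℝ)
    (hc : Integrable c ν) (g : P → 𝔼) (hg : Measurable g) (f : 𝔼 → ℝ) (hf : ContDiff ℝ 2 f)
    (hs : HasCompactSupport f) (x : 𝔼) :
    testLaplacian (fun x => ∫ p, c p • f (x + g p) ∂ν) x =
      ∫ p, c p • testLaplacian f (x + g p) ∂ν := by
  unfold testLaplacian
  simp_rw [Finset.smul_sum]
  rw [integral_finsetSum]
  · refine Finset.sum_congr rfl fun i _ => ?_
    have e : (fun y => fderiv ℝ (fun x => ∫ p, c p • f (x + g p) ∂ν) y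
        (EuclideanSpace.single i 1)) =
        fun y => ∫ p, c p • (fderiv ℝ f (y + g p) (EuclideanSpace.single i 1)) ∂ν :=
      funext fun y => shift_fderiv_apply ν c hc g hg f (hf.of_le (by norm_num)) hs y _
    rw [e]
    exact shift_fderiv_apply ν c hc g hg (fun y => fderiv ℝ f y (EuclideanSpace.single i 1))
      (pd_contDiff f hf _) (pd_supp f hs _) x _
  · intro i _
    exact shift_integrable ν c hc g hg
      (fun y => fderiv ℝ (fun y => fderiv ℝ f y (EuclideanSpace.single i 1)) y
        (EuclideanSpace.single i 1))
      (((pd_contDiff f hf _).continuous_fderiv (by simp)).clm_apply continuous_const)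
      (pd_supp _ (pd_supp f hs _) _) x

/-- The cut-off quadratic weight. -/
noncomputable def W (y : 𝔼) : ℝ := (1 - (min ‖y‖ 1) ^ 2) / 2

theorem W_lip : LipschitzWith 1 (W (m := m)) := by
  refine LipschitzWith.of_dist_le_mul fun x y => ?_
  have h : |min ‖x‖ 1 - min ‖y‖ 1| ≤ dist x y := by
    have h1 : |min ‖x‖ 1 - min ‖y‖ 1| ≤ |‖x‖ - ‖y‖| := by
      have := abs_min_sub_min_le_max ‖x‖ 1 ‖y‖ 1
      simpa using this
    exact h1.trans ((abs_norm_sub_norm_le x y).trans (dist_eq_norm x y).ge)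
  have hx0 : 0 ≤ min ‖x‖ 1 := le_min (norm_nonneg _) zero_le_one
  have hy0 : 0 ≤ min ‖y‖ 1 := le_min (norm_nonneg _) zero_le_one
  have hx1 : min ‖x‖ 1 ≤ 1 := min_le_right _ _
  have hy1 : min ‖y‖ 1 ≤ 1 := min_le_right _ _
  rw [Real.dist_eq]
  unfold W
  have e : (1 - (min ‖x‖ 1) ^ 2) / 2 - (1 - (min ‖y‖ 1) ^ 2) / 2 =
    -((min ‖x‖ 1 - min ‖y‖ 1) * ((min ‖x‖ 1 + min ‖y‖ 1) / 2)) := by ring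
  rw [e, abs_neg, abs_mul]
  have h3 : |(min ‖x‖ 1 + min ‖y‖ 1) / 2| ≤ 1 := by
    rw [abs_le]; constructor <;> linarith
  calc _ ≤ |min ‖x‖ 1 - min ‖y‖ 1| * 1 := mul_le_mul_of_nonneg_left h3 (abs_nonneg _)
    _ ≤ _ := by simpa using h

theorem W_out (y : 𝔼) (hy : 1 ≤ ‖y‖) : W y = 0 := by
  simp [W, min_eq_right hy]

theorem W_in (y : 𝔼) (hy : ‖y‖ ≤ 1) : W y = (1 - ‖y‖ ^ 2) / 2 := by
  simp [W, min_eq_left hy]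

theorem W_supp : HasCompactSupport (W (m := m)) := by
  refine HasCompactSupport.intro (isCompact_closedBall (0 : 𝔼) 1) fun x hx => ?_
  refine W_out x ?_
  simp at hx
  exact hx.le

theorem W_lineDeriv_out (y v : 𝔼) (hy : 1 < ‖y‖) : lineDeriv ℝ W y v = 0 := by
  have h : W =ᶠ[nhds y] fun _ => (0 : ℝ) := by
    filter_upwards [(isOpen_lt continuous_const continuous_norm).mem_nhds hy] with z hz
    exact W_out z (le_of_lt hz)
  have h2 : HasFDerivAt W (0 : 𝔼 →L[ℝ] ℝ) y :=
    (hasFDerivAt_const (0 : ℝ) y).congr_of_eventuallyEq h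
  rw [h2.differentiableAt.lineDeriv_eq_fderiv, h2.fderiv]; rfl

theorem W_lineDeriv_in (y v : 𝔼) (hy : ‖y‖ < 1) : lineDeriv ℝ W y v = - inner ℝ y v := by
  have h : W =ᶠ[nhds y] fun z => (1 - ‖z‖ ^ 2) / 2 := by
    filter_upwards [(isOpen_lt continuous_norm continuous_const).mem_nhds hy] with z hz
    exact W_in z (le_of_lt hz)
  have h1 : HasFDerivAt (fun z : 𝔼 => (1 - ‖z‖ ^ 2) * (2 : ℝ)⁻¹)
    ((2 : ℝ)⁻¹ • (-(2 • (innerSL ℝ y : 𝔼 →L[ℝ] ℝ)) : 𝔼 →L[ℝ] ℝ)) y :=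
    ((hasStrictFDerivAt_norm_sq y).hasFDerivAt.const_sub 1).mul_const _
  have h2 := HasFDerivAt.congr_of_eventuallyEq (f₁ := W) h1
    (by simpa [div_eq_mul_inv] using h)
  rw [h2.differentiableAt.lineDeriv_eq_fderiv, h2.fderiv]
  simp

/-- integration by parts on the unit ball -/
theorem ibp (f : 𝔼 → ℝ) (C : NNReal) (hf : LipschitzWith C f) (v : 𝔼) :
    ∫ y in closedBall (0 : 𝔼) 1, inner ℝ y v * f y =
      ∫ y in closedBall (0 : 𝔼) 1, (1 - ‖y‖ ^ 2) / 2 * lineDeriv ℝ f y v := by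
  have h := hf.integral_lineDeriv_mul_eq (μ := volume) W_lip W_supp v
  have hns : ∀ᵐ y : 𝔼, y ∉ sphere (0 : 𝔼) 1 :=
    measure_eq_zero_iff_ae_notMem.1 (Measure.addHaar_sphere_of_ne_zero volume 0 one_ne_zero)
  have e1 : ∫ y, lineDeriv ℝ f y v * W y =
      ∫ y in closedBall (0 : 𝔼) 1, (1 - ‖y‖ ^ 2) / 2 * lineDeriv ℝ f y v := by
    rw [← integral_indicator measurableSet_closedBall]
    congr 1; ext y
    by_cases hy : y ∈ closedBall (0 : 𝔼) 1
    · rw [indicator_of_mem hy, W_in y (by simpa using hy), mul_comm]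
    · rw [indicator_of_notMem hy, W_out y (by simp at hy; exact hy.le), mul_zero]
  have e2 : ∫ y, lineDeriv ℝ W y (-v) * f y =
      ∫ y in closedBall (0 : 𝔼) 1, inner ℝ y v * f y := by
    rw [← integral_indicator measurableSet_closedBall]
    refine integral_congr_ae ?_
    filter_upwards [hns] with y hy
    have hne : ‖y‖ ≠ 1 := by simpa using hy
    by_cases hy : y ∈ closedBall (0 : 𝔼) 1
    · rw [indicator_of_mem hy, W_lineDeriv_in y _ (lt_of_le_of_ne (by simpa using hy) hne)]
      simp
    · rw [indicator_of_notMem hy, W_lineDeriv_out y _ (by simpa using hy), zero_mul]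
  rw [← e1, ← e2, h]


/-- The parameter measure. -/
noncomputable def nu (m : ℕ) (δ : ℝ) : Measure (ℝ × EuclideanSpace ℝ (Fin m)) :=
  (volume.restrict (Icc 0 δ)).prod (volume.restrict (closedBall 0 1))

/-- The weight. -/
noncomputable def wt (p : ℝ × 𝔼) : ℝ := p.1 * ((1 - ‖p.2‖ ^ 2) / 2)

instance (δ : ℝ) : IsFiniteMeasure (nu m δ) := by
  have : IsFiniteMeasure ((volume : Measure 𝔼).restrict (closedBall 0 1)) :=
    ⟨by simpa using measure_closedBall_lt_top⟩
  unfold nu; infer_instance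

theorem nu_mem (δ : ℝ) : ∀ᵐ p ∂(nu m δ), p ∈ Icc 0 δ ×ˢ closedBall (0 : 𝔼) 1 := by
  unfold nu
  rw [Measure.prod_restrict]
  exact ae_restrict_mem (measurableSet_Icc.prod measurableSet_closedBall)

theorem wt_bound (δ : ℝ) (p : ℝ × 𝔼) (hp : p ∈ Icc 0 δ ×ˢ closedBall (0 : 𝔼) 1) :
    ‖wt p‖ ≤ δ / 2 := by
  obtain ⟨⟨h0, h1⟩, h2⟩ := hp
  have h3 : ‖p.2‖ ≤ 1 := by simpa using h2
  have h4 := norm_nonneg p.2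
  have h5 : ‖p.2‖ ^ 2 ≤ 1 := by nlinarith
  unfold wt
  rw [Real.norm_eq_abs, abs_of_nonneg (mul_nonneg h0 (by linarith))]
  nlinarith [sq_nonneg ‖p.2‖]

theorem wt_integrable (δ : ℝ) : Integrable wt (nu m δ) := by
  refine Integrable.of_bound (C := δ / 2) ?_ ?_
  · have : Continuous (wt (m := m)) := by unfold wt; fun_prop
    exact this.measurable.aestronglyMeasurable
  · filter_upwards [nu_mem δ] with p hp using wt_bound δ p hp

theorem gsm_meas : Measurable (fun p : ℝ × 𝔼 => p.1 • p.2) := by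
  have : Continuous (fun p : ℝ × 𝔼 => p.1 • p.2) := by fun_prop
  exact this.measurable

/-- The volume of the unit ball. -/
noncomputable def kap (m : ℕ) : ℝ := volume.real (closedBall (0 : EuclideanSpace ℝ (Fin m)) 1)

theorem kap_pos : 0 < kap m := by
  unfold kap
  rw [Measure.real, ENNReal.toReal_pos_iff]
  exact ⟨measure_closedBall_pos _ _ one_pos, measure_closedBall_lt_top⟩

theorem deriv_mean (f : 𝔼 → ℝ) (hf : ContDiff ℝ 1 f) (hs : HasCompactSupport f) (x : 𝔼) (r : ℝ) :
    HasDerivAt (fun r : ℝ => ∫ z in closedBall (0 : 𝔼) 1, f (x + r • z))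
      (∫ z in closedBall (0 : 𝔼) 1, fderiv ℝ f (x + r • z) z) r := by
  have hf' : Continuous (fderiv ℝ f) := hf.continuous_fderiv (by simp)
  have hfc := hf.continuous
  obtain ⟨C, hC⟩ := (hs.fderiv ℝ).exists_bound_of_continuous hf'
  have hmem : ∀ᵐ z ∂((volume : Measure 𝔼).restrict (closedBall 0 1)), z ∈ closedBall (0 : 𝔼) 1 :=
    ae_restrict_mem measurableSet_closedBall
  have hIntOn : ∀ h : 𝔼 → ℝ, Continuous h → IntegrableOn h (closedBall (0 : 𝔼) 1) := fun h hh =>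
    hh.continuousOn.integrableOn_compact (isCompact_closedBall _ _)
  refine (hasDerivAt_integral_of_dominated_loc_of_deriv_le (𝕜 := ℝ) (s := univ)
    (μ := (volume : Measure 𝔼).restrict (closedBall 0 1))
    (F := fun r z => f (x + r • z)) (F' := fun r z => fderiv ℝ f (x + r • z) z)
    (bound := fun _ => C) Filter.univ_mem ?_ ?_ ?_ ?_ ?_ ?_).2
  · exact Filter.Eventually.of_forall fun s => (hIntOn _ (by fun_prop)).aestronglyMeasurable
  · exact hIntOn _ (by fun_prop)
  · exact (hIntOn _ (by fun_prop)).aestronglyMeasurable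
  · filter_upwards [hmem] with z hz s _
    have h3 : ‖z‖ ≤ 1 := by simpa using hz
    calc _ ≤ ‖fderiv ℝ f (x + s • z)‖ * ‖z‖ := ContinuousLinearMap.le_opNorm _ _
      _ ≤ C * 1 := mul_le_mul (hC _) h3 (norm_nonneg _) ((norm_nonneg _).trans (hC 0))
      _ = C := mul_one C
  · exact hIntOn _ continuous_const
  · refine Filter.Eventually.of_forall fun z s _ => ?_
    have h1 : HasFDerivAt f (fderiv ℝ f (x + s • z)) (x + s • z) :=
      ((hf.differentiable (by simp)) _).hasFDerivAt
    have h2 : HasDerivAt (fun s : ℝ => x + s • z) z s := by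
      simpa using ((hasDerivAt_id s).smul_const z).const_add x
    exact h1.comp_hasDerivAt s h2

theorem mean_by_parts (f : 𝔼 → ℝ) (hf : ContDiff ℝ 2 f) (hs : HasCompactSupport f) (x : 𝔼)
    (r : ℝ) : ∫ z in closedBall (0 : 𝔼) 1, fderiv ℝ f (x + r • z) z =
      ∫ z in closedBall (0 : 𝔼) 1, wt (r, z) • testLaplacian f (x + r • z) := by
  have hIntOn : ∀ h : 𝔼 → ℝ, Continuous h → IntegrableOn h (closedBall (0 : 𝔼) 1) := fun h hh =>
    hh.continuousOn.integrableOn_compact (isCompact_closedBall _ _)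
  have hd : ∀ v, Continuous (fun y => fderiv ℝ f y v) := fun v => (pd_contDiff f hf v).continuous
  have hdd : ∀ v, Continuous (fun y => fderiv ℝ (fun y => fderiv ℝ f y v) y v) := fun v =>
    ((pd_contDiff f hf _).continuous_fderiv (by simp)).clm_apply continuous_const
  have e1 : ∀ z : 𝔼, fderiv ℝ f (x + r • z) z =
      ∑ i, inner ℝ z (EuclideanSpace.single i (1 : ℝ)) *
        fderiv ℝ f (x + r • z) (EuclideanSpace.single i 1) := by
    intro z
    have hz : z = ∑ i, z i • (EuclideanSpace.single i (1 : ℝ) : 𝔼) := by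
      have := (EuclideanSpace.basisFun (Fin m) ℝ).sum_repr z
      simpa using this.symm
    have h1 : fderiv ℝ f (x + r • z) z = fderiv ℝ f (x + r • z)
      (∑ i, z i • (EuclideanSpace.single i (1 : ℝ) : 𝔼)) := congrArg _ hz
    rw [h1, map_sum]
    refine Finset.sum_congr rfl fun i _ => ?_
    have h2 : inner ℝ z (EuclideanSpace.single i (1 : ℝ)) = z i := by
      rw [EuclideanSpace.inner_single_right]; simp
    rw [h2, map_smul, smul_eq_mul]
  have hcont : ∀ v, Continuous (fun z : 𝔼 => fderiv ℝ f (x + r • z) v) := fun v =>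
    (hd v).comp (by fun_prop)
  have hcont2 : ∀ v, Continuous
      (fun z : 𝔼 => fderiv ℝ (fun y => fderiv ℝ f y v) (x + r • z) v) := fun v =>
    (hdd v).comp (by fun_prop : Continuous fun z : 𝔼 => x + r • z)
  simp_rw [e1]
  unfold testLaplacian
  simp_rw [Finset.smul_sum]
  rw [integral_finsetSum, integral_finsetSum]
  · refine Finset.sum_congr rfl fun i _ => ?_
    set v : 𝔼 := EuclideanSpace.single i 1 with hv
    obtain ⟨C, hC⟩ := (pd_contDiff f hf v).lipschitzWith_of_hasCompactSupport (pd_supp f hs v)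
      one_ne_zero
    have hA : LipschitzWith (‖r‖₊) (fun z : 𝔼 => x + r • z) := by
      refine LipschitzWith.of_dist_le_mul fun a b => ?_
      rw [dist_add_left, dist_smul₀]; rfl
    refine (ibp _ _ (hC.comp hA) v).trans ?_
    refine integral_congr_ae (Filter.Eventually.of_forall fun z => ?_)
    have h1 : HasFDerivAt (fun y => fderiv ℝ f y v)
        (fderiv ℝ (fun y => fderiv ℝ f y v) (x + r • z)) (x + r • z) :=
      (((pd_contDiff f hf v).differentiable one_ne_zero) _).hasFDerivAt
    have h2 : HasFDerivAt (fun z : 𝔼 => x + r • z) (r • ContinuousLinearMap.id ℝ 𝔼) z :=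
      ((hasFDerivAt_id z).const_smul r).const_add x
    have h3 := h1.comp z h2
    have h4 : lineDeriv ℝ ((fun y => fderiv ℝ f y v) ∘ fun z : 𝔼 => x + r • z) z v =
        r * fderiv ℝ (fun y => fderiv ℝ f y v) (x + r • z) v := by
      rw [h3.differentiableAt.lineDeriv_eq_fderiv, h3.fderiv]; simp
    simp only [h4, wt, smul_eq_mul]
    ring
  · intro i _
    have hw : Continuous (fun z : 𝔼 => wt (r, z)) := by unfold wt; fun_prop
    exact hIntOn _ (hw.smul (hcont2 (EuclideanSpace.single i 1)))
  · intro i _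
    exact hIntOn _ (Continuous.mul (by fun_prop) (hcont _))

theorem mean_identity (f : 𝔼 → ℝ) (hf : ContDiff ℝ 2 f) (hs : HasCompactSupport f) (x : 𝔼)
    (δ : ℝ) (hδ : 0 < δ) :
    ∫ p, wt p • testLaplacian f (x + p.1 • p.2) ∂(nu m δ) =
      (∫ z in closedBall (0 : 𝔼) 1, f (x + δ • z)) - kap m * f x := by
  have hI := shift_integrable (nu m δ) wt (wt_integrable δ) (fun p => p.1 • p.2) gsm_meas
    (testLaplacian f) (lap_continuous f hf) (lap_supp f hs) x
  unfold nu at hI ⊢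
  rw [integral_prod _ hI, integral_Icc_eq_integral_Ioc,
    ← intervalIntegral.integral_of_le hδ.le]
  have hI2 := hI.integral_prod_left
  rw [intervalIntegral.integral_eq_sub_of_hasDerivAt
    (f := fun r : ℝ => ∫ z in closedBall (0 : 𝔼) 1, f (x + r • z))]
  · simp [kap]
  · intro r _
    rw [← mean_by_parts f hf hs]
    exact deriv_mean f (hf.of_le (by norm_num)) hs x r
  · rw [intervalIntegrable_iff_integrableOn_Icc_of_le hδ.le]
    exact hI2

/-- The potential. -/
noncomputable def pot (δ : ℝ) (f : 𝔼 → ℝ) (x : 𝔼) : ℝ :=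
  ∫ p, wt p • f (x + p.1 • p.2) ∂(nu m δ)

theorem pot_lap (f : 𝔼 → ℝ) (hf : ContDiff ℝ 2 f) (hs : HasCompactSupport f) (x : 𝔼)
    (δ : ℝ) (hδ : 0 < δ) :
    testLaplacian (pot δ f) x =
      (∫ z in closedBall (0 : 𝔼) 1, f (x + δ • z)) - kap m * f x := by
  rw [← mean_identity f hf hs x δ hδ]
  exact shift_lap (nu m δ) wt (wt_integrable δ) _ gsm_meas f hf hs x

theorem pot_contDiff (f : 𝔼 → ℝ) (hf : ContDiff ℝ 2 f) (hs : HasCompactSupport f)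
    (δ : ℝ) : ContDiff ℝ 2 (pot δ f) :=
  shift_contDiff_two (nu m δ) wt (wt_integrable δ) _ gsm_meas f hf hs

theorem pot_bound (f : 𝔼 → ℝ) (hf : ∀ x, ‖f x‖ ≤ 1) (δ : ℝ) (hδ : 0 < δ) (x : 𝔼) :
    ‖pot δ f x‖ ≤ kap m * (1 / 2 * δ ^ 2) := by
  have h : ‖pot δ f x‖ ≤ δ / 2 * (nu m δ).real univ := by
    refine norm_integral_le_of_norm_le_const ?_
    filter_upwards [nu_mem δ] with p hp
    rw [norm_smul]
    calc _ ≤ δ / 2 * 1 := mul_le_mul (wt_bound δ p hp) (hf _) (norm_nonneg _) (by linarith)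
      _ = _ := mul_one _
  have h2 : (nu m δ).real univ = δ * kap m := by
    unfold nu kap
    rw [← univ_prod_univ, measureReal_prod_prod]
    simp [hδ.le]
  rw [h2] at h
  linarith

theorem pot_zero (f : 𝔼 → ℝ) (δ : ℝ) (x : 𝔼)
    (hx : x ∉ cthickening δ (tsupport f)) : pot δ f x = 0 := by
  refine integral_eq_zero_of_ae ?_
  filter_upwards [nu_mem δ] with p hp
  obtain ⟨⟨h0, h1⟩, h2⟩ := hp
  have h3 : ‖p.2‖ ≤ 1 := by simpa using h2
  have : x + p.1 • p.2 ∉ tsupport f := by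
    intro hm
    refine hx (mem_cthickening_of_dist_le _ _ _ _ hm ?_)
    rw [dist_self_add_right, norm_smul, Real.norm_eq_abs, abs_of_nonneg h0]
    nlinarith [norm_nonneg p.2]
  simp [image_eq_zero_of_notMem_tsupport this]

theorem pot_tsupport (f : 𝔼 → ℝ) (δ : ℝ) :
    tsupport (pot δ f) ⊆ cthickening δ (tsupport f) := by
  refine closure_minimal ?_ isClosed_cthickening
  intro x hx
  by_contra h
  exact hx (pot_zero f δ x h)

open scoped Pointwise in
theorem mean_rescale (f : 𝔼 → ℝ) (x : 𝔼) (δ : ℝ) (hδ : 0 < δ) :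
    ∫ z in closedBall (0 : 𝔼) 1, f (x + δ • z) =
      kap m * ((volume.real (closedBall (0 : 𝔼) δ))⁻¹ * ∫ y in closedBall x δ, f y) := by
  have h := Measure.setIntegral_comp_smul_of_pos volume (fun y => f (x + y)) (closedBall (0 : 𝔼) 1) hδ
  rw [h]
  have e : δ • closedBall (0 : 𝔼) 1 = closedBall 0 δ := by
    rw [_root_.smul_closedBall _ _ zero_le_one]; simp [abs_of_pos hδ]
  have e2 : ∫ y in closedBall (0 : 𝔼) δ, f (x + y) = ∫ y in closedBall x δ, f y := by
    rw [← integral_indicator measurableSet_closedBall, ← integral_indicator measurableSet_closedBall,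
      ← integral_add_left_eq_self (indicator (closedBall x δ) f) x]
    congr 1; ext y
    simp [indicator]
  have e3 : volume.real (closedBall (0 : 𝔼) δ) = δ ^ m * kap m := by
    unfold kap Measure.real
    rw [Measure.addHaar_closedBall' _ _ hδ.le]
    simp [hδ.le]
  rw [e, e2, e3]
  have := kap_pos (m := m)
  have : δ ^ m ≠ 0 := by positivity
  simp
  field_simp

end Lap

section Final

variable {m : ℕ}

local notation "𝔼" => EuclideanSpace ℝ (Fin m)

theorem fubini_ball (f v : 𝔼 → ℝ) (hf : Integrable f) (hv : Integrable v) (δ : ℝ) :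
    Integrable (fun x => f x * ∫ y in closedBall x δ, v y) ∧
    Integrable (fun y => v y * ∫ x in closedBall y δ, f x) ∧
    ∫ x, f x * ∫ y in closedBall x δ, v y = ∫ y, v y * ∫ x in closedBall y δ, f x := by
  have hD : MeasurableSet {p : 𝔼 × 𝔼 | dist p.1 p.2 ≤ δ} :=
    (isClosed_le (by fun_prop) continuous_const).measurableSet
  have hI : Integrable (indicator {p : 𝔼 × 𝔼 | dist p.1 p.2 ≤ δ} fun p => f p.1 * v p.2)
      ((volume : Measure 𝔼).prod volume) := (hf.mul_prod hv).indicator hD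
  have e1 : ∀ x, ∫ y, indicator {p : 𝔼 × 𝔼 | dist p.1 p.2 ≤ δ} (fun p => f p.1 * v p.2) (x, y) =
      f x * ∫ y in closedBall x δ, v y := by
    intro x
    rw [← integral_indicator measurableSet_closedBall, ← integral_const_mul]
    congr 1; ext y
    simp [indicator, dist_comm x y]
  have e2 : ∀ y, ∫ x, indicator {p : 𝔼 × 𝔼 | dist p.1 p.2 ≤ δ} (fun p => f p.1 * v p.2) (x, y) =
      v y * ∫ x in closedBall y δ, f x := by
    intro y
    rw [← integral_indicator measurableSet_closedBall, ← integral_const_mul]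
    congr 1; ext x
    simp [indicator, mul_comm]
  refine ⟨?_, ?_, ?_⟩
  · have := hI.integral_prod_left
    simpa only [e1] using this
  · have := hI.integral_prod_right
    simpa only [e2] using this
  · have := integral_integral_swap (f := fun x y =>
      indicator {p : 𝔼 × 𝔼 | dist p.1 p.2 ≤ δ} (fun p => f p.1 * v p.2) (x, y)) hI
    simpa only [e1, e2] using this

theorem exists_cutoff (K U : Set 𝔼) (hK : IsCompact K) (hU : IsOpen U) (hKU : K ⊆ U) :
    ∃ χ : 𝔼 → ℝ, ContDiff ℝ 2 χ ∧ HasCompactSupport χ ∧ tsupport χ ⊆ U ∧ (∀ x ∈ K, χ x = 1) ∧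
      ∀ x, χ x ∈ Icc (0 : ℝ) 1 := by
  obtain ⟨L, hL, hKL, hLU⟩ := exists_compact_between hK hU hKU
  obtain ⟨f, h1, h0, h01⟩ := exists_contMDiffMap_one_nhds_of_subset_interior
    (modelWithCornersSelf ℝ 𝔼) (n := 2) hK.isClosed hKL
  have hsub : tsupport f ⊆ L := by
    refine closure_minimal (fun x hx => ?_) hL.isClosed
    by_contra h
    exact hx (h0 x h)
  refine ⟨f, f.contMDiff.contDiff, ?_, hsub.trans hLU, ?_, h01⟩
  · exact HasCompactSupport.intro hL h0
  · intro x hx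
    exact h1.self_of_nhdsSet x hx

theorem closedBall_sub (Ω : Set 𝔼) (δ : ℝ) (x : 𝔼) (hx : δ < infDist x Ωᶜ) :
    closedBall x δ ⊆ Ω := by
  intro z hz
  by_contra h
  have h1 : infDist x Ωᶜ ≤ dist x z := infDist_le_dist_of_mem h
  rw [mem_closedBall, dist_comm] at hz
  linarith

theorem compact_bound (Ω : Set 𝔼) (hΩ : IsOpen Ω) (u : 𝔼 → ℝ)
    (hu : LocallyIntegrableOn u Ω volume)
    (hsub : ∀ x : 𝔼, ∀ ρ : ℝ, 0 < ρ → closedBall x ρ ⊆ Ω →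
      u x ≤ ⨍ y in closedBall x ρ, u y ∂volume)
    (μ : Measure 𝔼)
    (hμ : ∀ φ : 𝔼 → ℝ, ContDiff ℝ 2 φ → HasCompactSupport φ →
          tsupport φ ⊆ Ω → ∫ x in Ω, u x * testLaplacian φ x = ∫ x, φ x ∂μ)
    (hfin : μ Ω ≠ ⊤) (δ : ℝ) (hδ : 0 < δ) (K : Set 𝔼) (hK : IsCompact K)
    (hKU : K ⊆ {x ∈ Ω | δ < infDist x Ωᶜ}) (hU : IsOpen {x ∈ Ω | δ < infDist x Ωᶜ}) :
    ∫⁻ x in K, ENNReal.ofReal ((⨍ y in closedBall x δ, u y ∂volume) - u x) ∂volume ≤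
            ENNReal.ofReal (1 / 2 * δ ^ 2) * μ Ω := by
  obtain ⟨χ, hχ, hχs, hχU, hχ1, hχ01⟩ := exists_cutoff K _ hK hU hKU
  set T := cthickening δ (tsupport χ) with hT
  have hTc : IsCompact T := hχs.isCompact.cthickening
  have hball : ∀ x ∈ tsupport χ, closedBall x δ ⊆ T := fun x hx =>
    closedBall_subset_cthickening hx δ
  have hST : tsupport χ ⊆ T := fun x hx => hball x hx (mem_closedBall_self hδ.le)
  have hTΩ : T ⊆ Ω := by
    rw [hT, hχs.isCompact.cthickening_eq_biUnion_closedBall hδ.le]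
    exact iUnion₂_subset fun x hx => closedBall_sub Ω δ x (hχU hx).2
  have hTm : MeasurableSet T := hTc.measurableSet
  set v : 𝔼 → ℝ := T.indicator u with hv
  have hvI : Integrable v := (integrable_indicator_iff hTm).2
    (hu.integrableOn_compact_subset hTΩ hTc)
  have hχI : Integrable χ := hχ.continuous.integrable_of_hasCompactSupport hχs
  set β := volume.real (closedBall (0 : 𝔼) δ) with hβ
  obtain ⟨I1, I2, hF⟩ := fubini_ball χ v hχI hvI δ
  have hχn : ∀ x, ‖χ x‖ ≤ 1 := fun x => by
    rw [Real.norm_eq_abs, abs_of_nonneg (hχ01 x).1]; exact (hχ01 x).2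
  have I3 : Integrable (fun x => v x * χ x) :=
    hvI.mul_bdd (c := 1) hχ.continuous.aestronglyMeasurable (Filter.Eventually.of_forall hχn)
  set H : 𝔼 → ℝ := fun x => β⁻¹ * (χ x * ∫ y in closedBall x δ, v y) - v x * χ x with hH
  have hHI : Integrable H := (I1.const_mul _).sub I3
  -- H in terms of the average
  have hHeq : ∀ x ∈ tsupport χ,
      H x = χ x * ((⨍ y in closedBall x δ, u y ∂volume) - u x) := by
    intro x hx
    have h1 : ∫ y in closedBall x δ, v y = ∫ y in closedBall x δ, u y :=
      setIntegral_congr_fun measurableSet_closedBall fun y hy =>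
        indicator_of_mem (hball x hx hy) u
    have h2 : volume.real (closedBall x δ) = β := by
      rw [hβ, Measure.real, Measure.real, Measure.addHaar_closedBall_center]
    rw [setAverage_eq, h2]
    simp only [hH, h1, smul_eq_mul]
    rw [hv, indicator_of_mem (hST hx)]
    ring
  have hH0 : ∀ x, 0 ≤ H x := by
    intro x
    by_cases hx : x ∈ tsupport χ
    · rw [hHeq x hx]
      refine mul_nonneg (hχ01 x).1 (sub_nonneg.2 (hsub x δ hδ ?_))
      exact (hball x hx).trans hTΩ
    · simp [hH, image_eq_zero_of_notMem_tsupport hx]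
  have hκ := kap_pos (m := m)
  -- the integral of H
  have hpot : ∫ x, H x = (kap m)⁻¹ * ∫ x, pot δ χ x ∂μ := by
    rw [← hμ (pot δ χ) (pot_contDiff χ hχ hχs δ)
      (HasCompactSupport.of_support_subset_isCompact hTc
        ((subset_tsupport _).trans (pot_tsupport χ δ)))
      ((pot_tsupport χ δ).trans hTΩ)]
    have hL : ∀ x, testLaplacian (pot δ χ) x =
        kap m * (β⁻¹ * (∫ y in closedBall x δ, χ y) - χ x) := by
      intro x
      rw [pot_lap χ hχ hχs x δ hδ, mean_rescale χ x δ hδ]; ring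
    have hL0 : ∀ x ∉ T, testLaplacian (pot δ χ) x = 0 := by
      intro x hx
      rw [hL]
      have h1 : ∫ y in closedBall x δ, χ y = 0 := by
        refine setIntegral_eq_zero_of_forall_eq_zero fun y hy => ?_
        refine image_eq_zero_of_notMem_tsupport fun hy' => hx ?_
        refine hball y hy' ?_
        rw [mem_closedBall, dist_comm]; exact hy
      rw [h1, image_eq_zero_of_notMem_tsupport fun h => hx (hST h)]
      simp
    have e1 : ∫ x in Ω, u x * testLaplacian (pot δ χ) x =
        ∫ x, kap m * (β⁻¹ * (v x * ∫ y in closedBall x δ, χ y) - v x * χ x) := by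
      rw [setIntegral_eq_integral_of_forall_compl_eq_zero]
      · congr 1; ext x
        by_cases hx : x ∈ T
        · rw [hL, hv, indicator_of_mem hx]; ring
        · rw [hL0 x hx, hv, indicator_of_notMem hx]; ring
      · intro x hx
        rw [hL0 x fun h => hx (hTΩ h), mul_zero]
    rw [e1, integral_const_mul, ← mul_assoc, inv_mul_cancel₀ hκ.ne', one_mul,
      integral_sub (I2.const_mul _) I3, integral_const_mul, ← hF, ← integral_const_mul,
      ← integral_sub (I1.const_mul _) I3]
  have hpb : ∫ x, pot δ χ x ∂μ ≤ kap m * (1 / 2 * δ ^ 2) * μ.real Ω := by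
    rw [← setIntegral_eq_integral_of_forall_compl_eq_zero (s := Ω)
      fun x hx => pot_zero χ δ x fun h => hx (hTΩ h)]
    refine (le_abs_self _).trans ?_
    exact norm_setIntegral_le_of_norm_le_const hfin.lt_top fun x _ => pot_bound χ hχn δ hδ x
  have hfinal : ∫ x, H x ≤ 1 / 2 * δ ^ 2 * μ.real Ω := by
    rw [hpot, inv_mul_le_iff₀ hκ]
    linarith
  calc ∫⁻ x in K, ENNReal.ofReal ((⨍ y in closedBall x δ, u y ∂volume) - u x) ∂volume
      = ∫⁻ x in K, ENNReal.ofReal (H x) := by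
        refine setLIntegral_congr_fun hK.measurableSet fun x hx => ?_
        have hxs : x ∈ tsupport χ := subset_tsupport _ (by simp [hχ1 x hx])
        simp only [hHeq x hxs, hχ1 x hx, one_mul]
    _ ≤ ∫⁻ x, ENNReal.ofReal (H x) := setLIntegral_le_lintegral _ _
    _ = ENNReal.ofReal (∫ x, H x) :=
        (ofReal_integral_eq_lintegral_ofReal hHI (Filter.Eventually.of_forall hH0)).symm
    _ ≤ ENNReal.ofReal (1 / 2 * δ ^ 2 * μ.real Ω) := ENNReal.ofReal_le_ofReal hfinal
    _ = _ := by
        rw [ENNReal.ofReal_mul (by positivity), Measure.real, ENNReal.ofReal_toReal hfin]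

end Final

end BallAvg

/-- Lemma 5.3(2): for a subharmonic `u` whose distributional Laplacian is the positive
measure `μ` with finite total mass, the ball averages `û_δ` satisfy
`∫_{Ω_δ} (û_δ - u) dV ≤ C_m ‖Δu‖_Ω δ²` for small `δ`, with `C_m` depending only on `m`. -/
theorem ballAverage_L1_estimate (m : ℕ) :
    ∃ C : ℝ, 0 < C ∧
      ∀ (Ω : Set (EuclideanSpace ℝ (Fin m))), IsOpen Ω → Bornology.IsBounded Ω →
      ∀ u : EuclideanSpace ℝ (Fin m) → ℝ,
        LocallyIntegrableOn u Ω volume →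
        -- submean property (subharmonicity)
        (∀ x : EuclideanSpace ℝ (Fin m), ∀ ρ : ℝ, 0 < ρ → closedBall x ρ ⊆ Ω →
          u x ≤ ⨍ y in closedBall x ρ, u y ∂volume) →
      ∀ μ : Measure (EuclideanSpace ℝ (Fin m)),
        -- μ is the distributional Laplacian of u on Ω
        (∀ φ : EuclideanSpace ℝ (Fin m) → ℝ, ContDiff ℝ 2 φ → HasCompactSupport φ →
          tsupport φ ⊆ Ω → ∫ x in Ω, u x * testLaplacian φ x = ∫ x, φ x ∂μ) →
        μ Ω ≠ ⊤ →
        ∃ δ₀ : ℝ, 0 < δ₀ ∧ ∀ δ : ℝ, 0 < δ → δ ≤ δ₀ →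
          ∫⁻ x in {x ∈ Ω | δ < infDist x Ωᶜ},
              ENNReal.ofReal ((⨍ y in closedBall x δ, u y ∂volume) - u x) ∂volume ≤
            ENNReal.ofReal (C * δ ^ 2) * μ Ω := by
  refine ⟨1 / 2, by norm_num, ?_⟩
  intro Ω hΩ hb u hu hsub μ hμ hfin
  refine ⟨1, one_pos, fun δ hδ _ => ?_⟩
  have hU : IsOpen {x ∈ Ω | δ < infDist x Ωᶜ} :=
    hΩ.inter (isOpen_lt continuous_const (continuous_infDist_pt _))
  obtain ⟨F, hFc, hFs, hFU, hFm⟩ := hU.exists_iUnion_isClosed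
  rw [← hFU, setLIntegral_iUnion_of_directed _ hFm.directed_le]
  refine iSup_le fun n => ?_
  have hFn : F n ⊆ {x ∈ Ω | δ < infDist x Ωᶜ} := hFs n
  refine BallAvg.compact_bound Ω hΩ u hu hsub μ hμ hfin δ hδ (F n) ?_ hFn hU
  exact isCompact_of_isClosed_isBounded (hFc n) (hb.subset (hFn.trans fun x hx => hx.1))
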